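/- For every cd-polynomial v ∈ ℤ⟨c,d⟩, the Tchebyshev transform satisfies T(v·a) = ω(a·v*)*, where * denotes reversal of monomials. -/

import Mathlib

open scoped TensorProduct

noncomputable section

namespace Tcheb

/-! ### The algebra `R⟨a,b⟩` of ab-polynomials -/

/-- Words in the two noncommuting letters `a` (encoded `true`) and `b` (encoded `false`). -/
abbrev ABWord : Type := FreeMonoid Bool

/-- The ring `R⟨a,b⟩` of polynomials in two noncommuting variables `a` and `b`. -/
abbrev AB (R : Type) [CommRing R] : Type := MonoidAlgebra R ABWord

variable (R : Type) [CommRing R]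

/-- The ab-monomial corresponding to a word. -/
def word (l : List Bool) : AB R := MonoidAlgebra.of R ABWord (FreeMonoid.ofList l)

/-- The variable `a`. -/
def av : AB R := word R [true]
/-- The variable `b`. -/
def bv : AB R := word R [false]
/-- `c = a + b`. -/
def cv : AB R := av R + bv R
/-- `d = ab + ba`. -/
def dv : AB R := av R * bv R + bv R * av R
/-- `a - b`. -/
def ev : AB R := av R - bv R

/-- The linear map defined by prescribing values on the basis of ab-monomials. -/
def onBasis {M : Type} [AddCommMonoid M] [Module R M] (f : List Bool → M) :
    AB R →ₗ[R] M :=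
  (Finsupp.lift M R ABWord fun w => f (FreeMonoid.toList w)) ∘ₗ
    (MonoidAlgebra.coeffLinearEquiv R).toLinearMap

/-- The algebra map `A` with `A(a) = 1`, `A(b) = 0`. -/
def Amap : AB R →ₐ[R] R :=
  MonoidAlgebra.lift R R ABWord (FreeMonoid.lift fun x => if x then (1 : R) else 0)

/-- The coproduct on `R⟨a,b⟩`: on an ab-monomial `u₁ ⋯ u_k` it is
`Σ_{i=1}^k u₁ ⋯ u_{i-1} ⊗ u_{i+1} ⋯ u_k`. -/
def Delta : AB R →ₗ[R] AB R ⊗[R] AB R :=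
  onBasis R fun w => ∑ i ∈ Finset.range w.length,
    word R (w.take i) ⊗ₜ[R] word R (w.drop (i + 1))

/-- The linear map `C(u) = 2·A(u) + Σ_u A(u₍₁₎)·A(u₍₂₎)`. -/
def Cmap : AB R →ₗ[R] R :=
  2 • (Amap R).toLinearMap +
    (LinearMap.mul' R R ∘ₗ
      TensorProduct.map (Amap R).toLinearMap (Amap R).toLinearMap) ∘ₗ Delta R

/-- `κ(u) = A(u)·(a-b)^(deg u)` on homogeneous `u`, extended linearly. -/
def kappa : AB R →ₗ[R] AB R :=
  onBasis R fun w => Amap R (word R w) • ev R ^ w.length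

/-- `ν(u) = C(u)·(a-b)^(deg u)` on homogeneous `u`, extended linearly. -/
def nuMap : AB R →ₗ[R] AB R :=
  onBasis R fun w => Cmap R (word R w) • ev R ^ w.length

end Tcheb

namespace Tcheb

/-- Cutting a word into the list of segments between the (sorted) cut positions. -/
def segments : List Bool → List ℕ → List (List Bool)
  | l, [] => [l]
  | l, i :: rest => l.take i :: segments (l.drop (i + 1)) (rest.map fun j => j - (i + 1))
  termination_by _ cuts => cuts.length
  decreasing_by simp

variable (R : Type) [CommRing R]

/-- For segments `[s₁, …, s_k]` this is `ν(s₁)·b·ν(s₂)·b ⋯ b·ν(s_{k-1})·b·κ(s_k)`. -/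
def chainProd : List (List Bool) → AB R
  | [] => 1
  | [s] => kappa R (word R s)
  | s :: rest => nuMap R (word R s) * bv R * chainProd rest

/-- The Tchebyshev transform (of the first kind) on ab-polynomials:
`T(u) = Σ_{k ≥ 1} Σ_u ν(u₍₁₎)·b·ν(u₍₂₎)·b ⋯ b·ν(u₍ₖ₋₁₎)·b·κ(u₍ₖ₎)`,
where the inner sum is over the `k`-fold coproduct.  On the ab-monomial basis this
is the sum, over all sets of positions of deleted letters, of the corresponding
products over the resulting segments. -/
def Tmap : AB R →ₗ[R] AB R :=
  onBasis R fun w => ∑ S : Finset (Fin w.length),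
    chainProd R (segments w ((S.sort (· ≤ ·)).map Fin.val))

/-- The `ω` map on a word: replace each occurrence of `ab` by `2d` and all
remaining letters by `c`. -/
def omegaWord : List Bool → AB R
  | [] => 1
  | true :: false :: rest => (2 * dv R) * omegaWord rest
  | _ :: rest => cv R * omegaWord rest

/-- The `ω` map of Billera–Ehrenborg–Readdy. -/
def omegaMap : AB R →ₗ[R] AB R := onBasis R fun w => omegaWord R w

/-- The reversal involution `u ↦ u*` of ab-polynomials. -/
def revMap : AB R →ₗ[R] AB R := onBasis R fun w => word R w.reverse

/-- `H*(1) = 0` and `H*(u·a) = H*(u·b) = u`. -/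
def Hstar : AB R →ₗ[R] AB R :=
  onBasis R fun w => if w = [] then 0 else word R w.dropLast

/-- The Tchebyshev transform of the second kind `U(u) = H*(T(u·a))`. -/
def Umap : AB R →ₗ[R] AB R := Hstar R ∘ₗ Tmap R ∘ₗ LinearMap.mulRight R (av R)

/-- `σ(u) = Σ_u κ(u₍₁₎)·b·T(u₍₂₎)`. -/
def sigmaMap : AB R →ₗ[R] AB R :=
  LinearMap.mul' R (AB R) ∘ₗ
    TensorProduct.map (LinearMap.mulRight R (bv R) ∘ₗ kappa R) (Tmap R) ∘ₗ Delta R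

/-! ### Graded posets and the ab-index -/

/-- `rk` is a rank function for a bounded poset: `rk ⊥ = 0` and covers raise rank by one. -/
def IsRankFun (α : Type) [PartialOrder α] [OrderBot α] (rk : α → ℕ) : Prop :=
  rk ⊥ = 0 ∧ ∀ x y : α, x ⋖ y → rk y = rk x + 1

/-- `f` lists the elements of a chain in increasing order with respect to the
strict order relation `lt`. -/
def IsStrictChain {α : Type} (lt : α → α → Prop) {n : ℕ} (f : Fin (n + 1) → α) : Prop :=
  ∀ i j : Fin (n + 1), i < j → lt (f i) (f j)

/-- The weight of a chain `x₀ < x₁ < ⋯ < x_k`: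
`(a-b)^{ρ(x₀,x₁)-1}·b·(a-b)^{ρ(x₁,x₂)-1}·b ⋯ b·(a-b)^{ρ(x_{k-1},x_k)-1}`. -/
def chainWt {α : Type} (rk : α → ℕ) {n : ℕ} (f : Fin (n + 1) → α) : AB R :=
  (List.intersperse (bv R)
    (List.ofFn fun i : Fin n => ev R ^ (rk (f i.succ) - rk (f i.castSucc) - 1))).prod

/-- The ab-index `Ψ` of the graded poset with strict order relation `lt`, rank
function `rk`, minimum `b` and maximum `t`: the sum of the weights of all chains
from `b` to `t`. -/
def PsiRel {α : Type} (lt : α → α → Prop) (rk : α → ℕ) (b t : α) : AB R :=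
  ∑ᶠ (n : ℕ), ∑ᶠ (f : Fin (n + 1) → α)
    (_ : IsStrictChain lt f ∧ f 0 = b ∧ f (Fin.last n) = t), chainWt R rk f

end Tcheb

namespace Tcheb

/-! ### The Tchebyshev transform of a graded poset -/

section TPoset

variable (α : Type) [PartialOrder α] [BoundedOrder α]

/-- The elements `[x,y]` of the Tchebyshev transform: intervals of `P ∪ {-1̂}`,
i.e. pairs `(x,y)` with `x ∈ P ∪ {-1̂}`, `y ∈ P` and `x < y`. -/
def TPel : Type := {p : WithBot α × α // p.1 < (p.2 : WithBot α)}

/-- The underlying set of the Tchebyshev transform `T(P)`: the intervals `[x,y]`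
together with a new maximum element (`none`). -/
def TP : Type := Option (TPel α)

/-- The cover relation of the Tchebyshev transform `T(P)`:
`[x,y] ⋖ [y,w]` and `[x,y] ⋖ [x,w]` whenever `y ⋖ w` in `P`, and `[x,1̂] ⋖ 1̂_{T(P)}`. -/
inductive TPcov : TP α → TP α → Prop
  | up {x : WithBot α} {y w : α} (h1 : x < (y : WithBot α))
      (h2 : (y : WithBot α) < (w : WithBot α)) (hc : y ⋖ w) :
      TPcov (some ⟨(x, y), h1⟩) (some ⟨((y : WithBot α), w), h2⟩)
  | same {x : WithBot α} {y w : α} (h1 : x < (y : WithBot α))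
      (h2 : x < (w : WithBot α)) (hc : y ⋖ w) :
      TPcov (some ⟨(x, y), h1⟩) (some ⟨(x, w), h2⟩)
  | top {x : WithBot α} (h1 : x < ((⊤ : α) : WithBot α)) :
      TPcov (some ⟨(x, (⊤ : α)), h1⟩) none

/-- The strict order relation of `T(P)`, generated by the cover relation. -/
def TPlt : TP α → TP α → Prop := Relation.TransGen (TPcov α)

/-- The order relation of `T(P)`, generated by the cover relation. -/
def TPle : TP α → TP α → Prop := Relation.ReflTransGen (TPcov α)

/-- The minimum element `[-1̂, 0̂]` of `T(P)`. -/
def TPbot : TP α := some ⟨((⊥ : WithBot α), (⊥ : α)), WithBot.bot_lt_coe _⟩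

/-- The maximum element `1̂_{T(P)}` of `T(P)`. -/
def TPtop : TP α := none

/-- The rank function of `T(P)`: `ρ([x,y]) = ρ(y)` and `ρ(1̂_{T(P)}) = ρ(P) + 1`. -/
def TPrk (rk : α → ℕ) : TP α → ℕ
  | some p => rk p.1.2
  | none => rk (⊤ : α) + 1

theorem TPbot_ne_TPtop : TPbot α ≠ TPtop α := by exact Option.some_ne_none _

/-- The map `z : T(P) → P ∪ {2̂}` with `z([x,y]) = y` and `z(1̂_{T(P)}) = 2̂`. -/
def zmap : TP α → WithTop α
  | some p => (p.1.2 : WithTop α)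
  | none => ⊤

/-- The number of elements of the interval `[u,v]` of `P`, for `u, v ∈ P ∪ {2̂}`. -/
def intervalCard (u v : WithTop α) : ℕ :=
  Set.ncard {t : α | u ≤ (t : WithTop α) ∧ (t : WithTop α) ≤ v}

end TPoset

/-! ### The dual diamond product -/

/-- The strict order relation of the dual diamond product
`P ◇* Q = ((P ∖ {1̂}) × (Q ∖ {1̂})) ∪ {1̂}` (with `none` the new maximum), built from
the order relations `leA, ltA` and `leB, ltB` of the two factors. -/
def dsLT {A B : Type} (leA ltA : A → A → Prop) (leB ltB : B → B → Prop) :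
    Option (A × B) → Option (A × B) → Prop
  | some p, some q => (leA p.1 q.1 ∧ leB p.2 q.2) ∧ (ltA p.1 q.1 ∨ ltB p.2 q.2)
  | some _, none => True
  | none, _ => False

/-! ### EL-labelings -/

/-- The list of edge labels along a chain (given as a list of poset elements). -/
def labelsList {α Λ : Type} (lam : α → α → Λ) (l : List α) : List Λ :=
  (l.zip l.tail).map fun p => lam p.1 p.2

/-- `l` is a maximal (saturated) chain of the interval `[x,y]` with respect to the
cover relation `cov`: it runs from `x` to `y` and every step is a cover. -/
def IsMaxChainList {α : Type} (cov : α → α → Prop) (x y : α) (l : List α) : Prop :=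
  l.head? = some x ∧ l.getLast? = some y ∧ l.Chain' cov

/-- An `EL`-labeling of the poset whose cover relation is `cov`, with labels in the
linearly ordered set `(Λ, lle, llt)`: every interval has a unique rising maximal
chain, which moreover is lexicographically least among all maximal chains of the
interval. -/
def IsELLabeling (α Λ : Type) (lle llt : Λ → Λ → Prop)
    (cov : α → α → Prop) (lam : α → α → Λ) : Prop :=
  ∀ x y : α, Relation.ReflTransGen cov x y →
    ∃ l : List α, (IsMaxChainList cov x y l ∧ (labelsList lam l).Chain' lle) ∧
      (∀ l' : List α, IsMaxChainList cov x y l' →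
        (labelsList lam l').Chain' lle → l' = l) ∧
      (∀ l' : List α, IsMaxChainList cov x y l' →
        labelsList lam l = labelsList lam l' ∨
          List.Lex llt (labelsList lam l) (labelsList lam l'))

/-! ### Eulerian posets -/

/-- A graded poset is Eulerian if every nontrivial interval `[x,y]` has the
same number of elements of even rank as of odd rank. -/
def IsEulerian (α : Type) [PartialOrder α] (rk : α → ℕ) : Prop :=
  ∀ x y : α, x < y →
    Set.ncard {z : α | x ≤ z ∧ z ≤ y ∧ Even (rk z)} =
      Set.ncard {z : α | x ≤ z ∧ z ≤ y ∧ ¬ Even (rk z)}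

/-! ### The face lattice of the crosspolytope -/

/-- A face of the `n`-dimensional crosspolytope: a partial sign vector, i.e. the
pair `(S, ε)` of a subset `S ⊆ {1,…,n}` (the set of coordinates where the function
takes a value `some`) together with a sign function `ε` on `S`. -/
def CrossEl (n : ℕ) : Type := Fin n → Option Bool

/-- `(S,ε) ≤ (T,δ)` iff `S ⊆ T` and `δ` restricted to `S` is `ε`. -/
instance (n : ℕ) : PartialOrder (CrossEl n) where
  le f g := ∀ i s, f i = some s → g i = some s
  le_refl f i s h := h
  le_trans f g h fg gh i s hi := gh i s (fg i s hi)
  le_antisymm f g fg gf := by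
    funext i
    cases hf : f i with
    | some s => exact (fg i s hf).symm
    | none =>
      cases hg : g i with
      | some s => exact absurd (gf i s hg) (by simp [hf])
      | none => rfl

/-- The face lattice of the `n`-dimensional crosspolytope: all partial sign
vectors together with a new maximum element. -/
abbrev Cross (n : ℕ) : Type := WithTop (CrossEl n)

/-- The rank function of the face lattice of the crosspolytope:
`ρ(S,ε) = |S|` and the maximum has rank `n + 1`. -/
def crossRk (n : ℕ) : Cross n → ℕ
  | none => n + 1
  | some f => (Finset.univ.filter fun i : Fin n => (f i).isSome).card

/-- The minimal element (the empty face) of the crosspolytope face lattice. -/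
def crossBot (n : ℕ) : Cross n := WithTop.some (fun _ => none)

/-- The maximal element of the crosspolytope face lattice. -/
def crossTop (n : ℕ) : Cross n := ⊤

/-! ### Quasisymmetric functions -/

/-- The monomial quasisymmetric function `M_{(p₁,…,p_k)}`, as a formal power
series in the countably many commuting variables `t₁, t₂, …` (indexed by `ℕ`). -/
def MQ (R : Type) [CommRing R] (ps : List ℕ) : MvPowerSeries ℕ R :=
  fun m => if ((m.support.sort (· ≤ ·)).map fun i => m i) = ps then 1 else 0

/-- The `t`-part of a monomial in the variables `s` (index `none`) and
`t₁, t₂, …` (indices `some i`). -/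
def tpart (m : Option ℕ →₀ ℕ) : ℕ →₀ ℕ :=
  Finsupp.comapDomain some m (Option.some_injective ℕ).injOn

/-- The type B monomial quasisymmetric function `s^p · M_{(p₁,…,p_k)}`, a formal
power series in the variables `s` (index `none`) and `t₁, t₂, …` (indices `some i`). -/
def MB (R : Type) [CommRing R] (p : ℕ) (ps : List ℕ) : MvPowerSeries (Option ℕ) R :=
  fun m => if m none = p ∧
      (((tpart m).support.sort (· ≤ ·)).map fun i => tpart m i) = ps then 1 else 0

/-- The quasisymmetric function `F(P)` of the graded poset with strict order
relation `lt`, rank function `rk`, minimum `b` and maximum `t`: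
`F(P) = Σ_c M_{(ρ(x₀,x₁),…,ρ(x_{k-1},x_k))}` over all chains `c` from `b` to `t`. -/
def FQ (R : Type) [CommRing R] {α : Type} (lt : α → α → Prop) (rk : α → ℕ)
    (b t : α) : MvPowerSeries ℕ R :=
  ∑ᶠ (n : ℕ), ∑ᶠ (f : Fin (n + 1) → α)
    (_ : IsStrictChain lt f ∧ f 0 = b ∧ f (Fin.last n) = t),
    MQ R (List.ofFn fun i : Fin n => rk (f i.succ) - rk (f i.castSucc))

/-- The type B quasisymmetric function `F_B(P) = Σ_{0̂ < x ≤ 1̂} s^{ρ(x)-1}·F([x,1̂])`,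
written as a sum over all chains `0̂ < x₀ < x₁ < ⋯ < x_k = 1̂` of
`s^{ρ(x₀)-1}·M_{(ρ(x₀,x₁),…,ρ(x_{k-1},x_k))}`. -/
def FB (R : Type) [CommRing R] {α : Type} (lt : α → α → Prop) (rk : α → ℕ)
    (b t : α) : MvPowerSeries (Option ℕ) R :=
  ∑ᶠ (n : ℕ), ∑ᶠ (f : Fin (n + 1) → α)
    (_ : IsStrictChain lt f ∧ lt b (f 0) ∧ f (Fin.last n) = t),
    MB R (rk (f 0) - 1) (List.ofFn fun i : Fin n => rk (f i.succ) - rk (f i.castSucc))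

/-! ### Characters and the chain maps -/

/-- A character on `k⟨a,b⟩`: a linear functional which is multiplicative with
respect to Cartesian products of graded posets (of rank at least 1). -/
def IsCharacter (k : Type) [Field k] (G : AB k →ₗ[k] k) : Prop :=
  ∀ (α β : Type) [Fintype α] [Fintype β] [PartialOrder α] [PartialOrder β]
    [BoundedOrder α] [BoundedOrder β], ∀ (rkα : α → ℕ) (rkβ : β → ℕ),
    IsRankFun α rkα → IsRankFun β rkβ → 1 ≤ rkα ⊤ → 1 ≤ rkβ ⊤ →
    G (PsiRel k (· < ·) (fun p : α × β => rkα p.1 + rkβ p.2)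
        ((⊥ : α), (⊥ : β)) ((⊤ : α), (⊤ : β))) =
      G (PsiRel k (· < ·) rkα ⊥ ⊤) * G (PsiRel k (· < ·) rkβ ⊥ ⊤)

/-- The quasisymmetric function image `g̃F(P)` of the chain map of the second kind:
`Σ_c G(Ψ([x₀,x₁])) ⋯ G(Ψ([x_{k-1},x_k])) · M_{(ρ(x₀,x₁),…,ρ(x_{k-1},x_k))}`,
summed over all chains `c = {b = x₀ < ⋯ < x_k = t}`. -/
def gtF (k : Type) [Field k] (G : AB k →ₗ[k] k) {α : Type} (lt : α → α → Prop)
    (rk : α → ℕ) (b t : α) : MvPowerSeries ℕ k :=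
  ∑ᶠ (n : ℕ), ∑ᶠ (f : Fin (n + 1) → α)
    (_ : IsStrictChain lt f ∧ f 0 = b ∧ f (Fin.last n) = t),
    (∏ i : Fin n, G (PsiRel k lt rk (f i.castSucc) (f i.succ))) •
      MQ k (List.ofFn fun i : Fin n => rk (f i.succ) - rk (f i.castSucc))

/-- The type B quasisymmetric function image `gF_B(P) = Σ_{0̂ < x ≤ 1̂}
s^{ρ(x)-1}·g̃F([x,1̂])` of the chain map of the first kind, written as a sum over
all chains `0̂ < x₀ < ⋯ < x_k = 1̂`. -/
def gFB (k : Type) [Field k] (G : AB k →ₗ[k] k) {α : Type} (lt : α → α → Prop)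
    (rk : α → ℕ) (b t : α) : MvPowerSeries (Option ℕ) k :=
  ∑ᶠ (n : ℕ), ∑ᶠ (f : Fin (n + 1) → α)
    (_ : IsStrictChain lt f ∧ lt b (f 0) ∧ f (Fin.last n) = t),
    (∏ i : Fin n, G (PsiRel k lt rk (f i.castSucc) (f i.succ))) •
      MB k (rk (f 0) - 1) (List.ofFn fun i : Fin n => rk (f i.succ) - rk (f i.castSucc))

/-- The space of homogeneous ab-polynomials of degree `n`. -/
def ABhomog (k : Type) [Field k] (n : ℕ) : Submodule k (AB k) :=
  Submodule.span k {x : AB k | ∃ w : List Bool, w.length = n ∧ x = word k w}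


/-! ### Helper lemmas -/

section Helpers

variable (R : Type) [CommRing R]

theorem onBasis_word {M : Type} [AddCommMonoid M] [Module R M] (f : List Bool → M)
    (l : List Bool) : onBasis R f (word R l) = f l := by
  simp [onBasis, word, MonoidAlgebra.of, MonoidAlgebra.coeffLinearEquiv]

theorem word_mul (l m : List Bool) : word R l * word R m = word R (l ++ m) := by
  simp [word]

theorem word_nil : word R [] = 1 := by
  simp [word]; rfl

theorem ext_word {M : Type} [AddCommMonoid M] [Module R M] {f g : AB R →ₗ[R] M}
    (h : ∀ l, f (word R l) = g (word R l)) : f = g := by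
  apply MonoidAlgebra.lhom_ext'
  intro w
  apply LinearMap.ext_ring
  exact h (FreeMonoid.toList w)

theorem revMap_word (l : List Bool) : revMap R (word R l) = word R l.reverse :=
  onBasis_word R _ _

theorem revMap_mul (x y : AB R) : revMap R (x * y) = revMap R y * revMap R x := by
  have : (LinearMap.mul R (AB R)).compr₂ (revMap R) =
      ((LinearMap.mul R (AB R)).flip.compl₁₂ (revMap R) (revMap R)) := by
    apply ext_word
    intro l
    apply ext_word
    intro m
    simp [revMap_word, word_mul]
  exact LinearMap.congr_fun₂ this x y

theorem revMap_a : revMap R (av R) = av R := by simp [av, revMap_word]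
theorem revMap_b : revMap R (bv R) = bv R := by simp [bv, revMap_word]
theorem revMap_c : revMap R (cv R) = cv R := by simp [cv, revMap_a, revMap_b]
theorem revMap_d : revMap R (dv R) = dv R := by
  simp [dv, revMap_a, revMap_b, revMap_mul, add_comm]

theorem omega_ab (x : AB R) :
    omegaMap R (av R * (bv R * x)) = 2 * dv R * omegaMap R x := by
  have : omegaMap R ∘ₗ LinearMap.mulLeft R (av R) ∘ₗ LinearMap.mulLeft R (bv R) =
      LinearMap.mulLeft R (2 * dv R) ∘ₗ omegaMap R := by
    apply ext_word
    intro l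
    simp [av, bv, word_mul, omegaMap, onBasis_word, omegaWord, mul_assoc]
  exact LinearMap.congr_fun this x

theorem omega_aa (x : AB R) :
    omegaMap R (av R * (av R * x)) = cv R * omegaMap R (av R * x) := by
  have : omegaMap R ∘ₗ LinearMap.mulLeft R (av R) ∘ₗ LinearMap.mulLeft R (av R) =
      LinearMap.mulLeft R (cv R) ∘ₗ omegaMap R ∘ₗ LinearMap.mulLeft R (av R) := by
    apply ext_word
    intro l
    simp [av, word_mul, omegaMap, onBasis_word]
    rw [omegaWord]
    simp
  exact LinearMap.congr_fun this x

theorem omega_b (x : AB R) :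
    omegaMap R (bv R * x) = cv R * omegaMap R x := by
  have : omegaMap R ∘ₗ LinearMap.mulLeft R (bv R) =
      LinearMap.mulLeft R (cv R) ∘ₗ omegaMap R := by
    apply ext_word
    intro l
    simp [bv, word_mul, omegaMap, onBasis_word, omegaWord]
  exact LinearMap.congr_fun this x

/-- `G(v) = ω(a v*)*`. -/
def Gm : AB R →ₗ[R] AB R :=
  revMap R ∘ₗ omegaMap R ∘ₗ LinearMap.mulLeft R (av R) ∘ₗ revMap R
/-- `H(v) = ω(v*)*`. -/
def Hm : AB R →ₗ[R] AB R := revMap R ∘ₗ omegaMap R ∘ₗ revMap R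

theorem rev_two : revMap R 2 = 2 := by
  have h1 : revMap R 1 = 1 := by rw [← word_nil, revMap_word]; rfl
  rw [← one_add_one_eq_two, map_add, h1]

theorem Gm_c (v : AB R) : Gm R (v * cv R) = Gm R v * cv R + 2 * (Hm R v * dv R) := by
  have h : av R * (cv R * revMap R v) =
    av R * (av R * revMap R v) + av R * (bv R * revMap R v) := by
    rw [cv, add_mul, mul_add]
  simp [Gm, Hm, revMap_mul, revMap_c, h, omega_aa, omega_ab, rev_two, revMap_d]
  noncomm_ring

theorem Hm_c (v : AB R) : Hm R (v * cv R) = Gm R v + Hm R v * cv R := by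
  have h : (cv R * revMap R v) = (av R * revMap R v) + (bv R * revMap R v) := by
    rw [cv, add_mul]
  simp [Gm, Hm, revMap_mul, revMap_c, h, omega_b]

theorem Gm_d (v : AB R) :
    Gm R (v * dv R) = 2 * (Hm R v * dv R * cv R) + 2 * (Gm R v * dv R) := by
  have h : av R * (dv R * revMap R v) =
    av R * (av R * (bv R * revMap R v)) + av R * (bv R * (av R * revMap R v)) := by
    rw [dv, add_mul, mul_add, mul_assoc, mul_assoc]
  simp [Gm, Hm, revMap_mul, revMap_c, h, omega_aa, omega_ab, rev_two, revMap_d, mul_assoc]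
  noncomm_ring

theorem Hm_d (v : AB R) :
    Hm R (v * dv R) = 2 * (Hm R v * dv R) + Gm R v * cv R := by
  have h : (dv R * revMap R v) =
    av R * (bv R * revMap R v) + bv R * (av R * revMap R v) := by
    rw [dv, add_mul, mul_assoc, mul_assoc]
  simp [Gm, Hm, revMap_mul, revMap_c, h, omega_b, omega_ab, rev_two, revMap_d]
  noncomm_ring

/-! #### The transform side -/

theorem Amap_snoc (l : List Bool) (x : Bool) :
    Amap R (word R (l ++ [x])) = if x then Amap R (word R l) else 0 := by
  rw [← word_mul, map_mul]
  have : Amap R (word R [x]) = if x then (1 : R) else 0 := by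
    simp [Amap, word]
  rw [this]
  split <;> simp

theorem Cmap_word (l : List Bool) : Cmap R (word R l) = 2 * Amap R (word R l) +
    ∑ i ∈ Finset.range l.length,
      Amap R (word R (l.take i)) * Amap R (word R (l.drop (i + 1))) := by
  simp [Cmap, Delta, onBasis_word]

theorem Cmap_snoc (l : List Bool) (x : Bool) :
    Cmap R (word R (l ++ [x])) =
      (if x then Cmap R (word R l) else 0) + Amap R (word R l) := by
  rw [Cmap_word, Cmap_word, List.length_append, List.length_singleton, Finset.sum_range_succ]
  have h : ∀ i ∈ Finset.range l.length,
      Amap R (word R ((l ++ [x]).take i)) * Amap R (word R ((l ++ [x]).drop (i + 1))) =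
      if x then Amap R (word R (l.take i)) * Amap R (word R (l.drop (i + 1))) else 0 := by
    intro i hi
    rw [Finset.mem_range] at hi
    rw [List.take_append_of_le_length hi.le, List.drop_append_of_le_length hi, Amap_snoc]
    split <;> simp
  rw [Finset.sum_congr rfl h, Amap_snoc]
  have h2 : (l ++ [x]).drop (l.length + 1) = [] := by simp
  rw [h2, List.take_append_of_le_length le_rfl, List.take_length, word_nil, map_one]
  cases x <;> simp [add_assoc]

theorem kappa_word (l : List Bool) :
    kappa R (word R l) = Amap R (word R l) • ev R ^ l.length := onBasis_word R _ _
theorem nu_word (l : List Bool) :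
    nuMap R (word R l) = Cmap R (word R l) • ev R ^ l.length := onBasis_word R _ _

/-- `κ` on words. -/
def kw (l : List Bool) : AB R := kappa R (word R l)
/-- `ν` on words. -/
def nw (l : List Bool) : AB R := nuMap R (word R l)

theorem kw_nil : kw R [] = 1 := by
  rw [kw, kappa_word, word_nil]; simp
theorem nw_nil : nw R [] = 2 := by
  rw [nw, nu_word, Cmap_word, word_nil]
  simp only [map_one, List.length_nil, Finset.range_zero, Finset.sum_empty, pow_zero,
    Algebra.smul_def, mul_one, add_zero, map_ofNat]
theorem kw_a (l : List Bool) : kw R (l ++ [true]) = kw R l * ev R := by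
  rw [kw, kw, kappa_word, kappa_word, Amap_snoc]; simp [pow_succ]
theorem kw_b (l : List Bool) : kw R (l ++ [false]) = 0 := by
  rw [kw, kappa_word, Amap_snoc]; simp
theorem nw_a (l : List Bool) : nw R (l ++ [true]) = nw R l * ev R + kw R l * ev R := by
  rw [nw, nw, kw, kappa_word, nu_word, nu_word, Cmap_snoc]; simp [pow_succ, add_smul]
theorem nw_b (l : List Bool) : nw R (l ++ [false]) = kw R l * ev R := by
  rw [nw, kw, kappa_word, nu_word, Cmap_snoc]; simp [pow_succ]

/-- Product over segments with an arbitrary function applied to the last segment. -/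
def Pf (f : List Bool → AB R) : List Bool → List ℕ → AB R
  | l, [] => f l
  | l, i :: rest => nw R (l.take i) * bv R *
      Pf f (l.drop (i + 1)) (rest.map fun j => j - (i + 1))
  termination_by _ cuts => cuts.length
  decreasing_by simp

theorem cuts_induct {motive : List Bool → List ℕ → Prop} (case1 : ∀ l, motive l [])
    (case2 : ∀ l i rest, motive (l.drop (i + 1)) (rest.map fun j => j - (i + 1)) →
      motive l (i :: rest)) (l : List Bool) (cuts : List ℕ) : motive l cuts := by
  induction hn : cuts.length generalizing l cuts with
  | zero => rw [List.length_eq_zero_iff.1 hn]; exact case1 l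
  | succ n ih =>
    cases cuts with
    | nil => simp at hn
    | cons i rest => exact case2 l i rest (ih _ _ (by simpa using hn))

theorem segments_ne_nil (l : List Bool) (cuts : List ℕ) : segments l cuts ≠ [] := by
  cases cuts <;> simp [segments]

theorem chainProd_cons (s : List Bool) {t : List (List Bool)} (h : t ≠ []) :
    chainProd R (s :: t) = nw R s * bv R * chainProd R t := by
  cases t with
  | nil => exact absurd rfl h
  | cons => rfl

theorem chainProd_segments (l : List Bool) (cuts : List ℕ) :
    chainProd R (segments l cuts) = Pf R (kw R) l cuts := by
  induction l, cuts using cuts_induct with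
  | case1 l => simp [segments, Pf, chainProd, kw]
  | case2 l i rest ih =>
    rw [segments, Pf, chainProd_cons R _ (segments_ne_nil _ _), ih]

theorem Pf_add (f g : List Bool → AB R) (l : List Bool) (cuts : List ℕ) :
    Pf R (fun s => f s + g s) l cuts = Pf R f l cuts + Pf R g l cuts := by
  induction l, cuts using cuts_induct with
  | case1 l => simp [Pf]
  | case2 l i rest ih => rw [Pf, Pf, Pf, ih, mul_add]

theorem Pf_mul (f : List Bool → AB R) (e : AB R) (l : List Bool) (cuts : List ℕ) :
    Pf R (fun s => f s * e) l cuts = Pf R f l cuts * e := by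
  induction l, cuts using cuts_induct with
  | case1 l => simp [Pf]
  | case2 l i rest ih => simp only [Pf, ih, mul_assoc]

theorem Pf_zero (l : List Bool) (cuts : List ℕ) : Pf R (fun _ => 0) l cuts = 0 := by
  induction l, cuts using cuts_induct with
  | case1 l => simp [Pf]
  | case2 l i rest ih => rw [Pf, ih, mul_zero]

/-- Valid cut lists. -/
def Vd (n : ℕ) (cuts : List ℕ) : Prop := cuts.Pairwise (· < ·) ∧ ∀ c ∈ cuts, c < n

theorem Vd_tail {n i : ℕ} {rest : List ℕ} (h : Vd n (i :: rest)) :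
    Vd (n - (i + 1)) (rest.map fun j => j - (i + 1)) := by
  obtain ⟨h1, h2⟩ := h
  rw [List.pairwise_cons] at h1
  constructor
  · rw [List.pairwise_map]
    refine h1.2.imp_of_mem ?_
    intro a b ha hb hab
    have := h1.1 a ha
    omega
  · intro c hc
    rw [List.mem_map] at hc
    obtain ⟨j, hj, rfl⟩ := hc
    have := h1.1 j hj
    have := h2 j (by simp [hj])
    omega

theorem Pf_snoc (f : List Bool → AB R) (x : Bool) (l : List Bool) (cuts : List ℕ)
    (h : Vd l.length cuts) :
    Pf R f (l ++ [x]) cuts = Pf R (fun s => f (s ++ [x])) l cuts := by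
  induction l, cuts using cuts_induct with
  | case1 l => simp [Pf]
  | case2 l i rest ih =>
    have hi : i < l.length := h.2 i (by simp)
    rw [Pf, Pf, List.take_append_of_le_length hi.le, List.drop_append_of_le_length hi, Nat.succ_eq_add_one, ih]
    rw [List.length_drop]
    exact Vd_tail h

theorem Pf_snoc' (f : List Bool → AB R) (x : Bool) (l : List Bool) (cuts : List ℕ)
    (h : Vd l.length cuts) :
    Pf R f (l ++ [x]) (cuts ++ [l.length]) = Pf R (nw R) l cuts * (bv R * f []) := by
  induction l, cuts using cuts_induct with
  | case1 l => simp [Pf, mul_assoc]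
  | case2 l i rest ih =>
    have hi : i < l.length := h.2 i (by simp)
    rw [List.length_drop] at ih
    rw [List.cons_append, Pf, Pf, List.take_append_of_le_length hi.le,
      List.drop_append_of_le_length hi, List.map_append, List.map_singleton, ih (Vd_tail h),
      mul_assoc (nw R _ * bv R)]

/-- Sum over all cut lists. -/
def Qf (f : List Bool → AB R) (l : List Bool) : AB R :=
  ∑ S ∈ (Finset.range l.length).powerset, Pf R f l (S.sort (· ≤ ·))

theorem Vd_sort {n : ℕ} {S : Finset ℕ} (h : S ∈ (Finset.range n).powerset) :
    Vd n (S.sort (· ≤ ·)) := by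
  constructor
  · exact (Finset.sortedLT_sort S).pairwise
  · intro c hc
    rw [Finset.mem_sort] at hc
    exact Finset.mem_range.1 (Finset.mem_powerset.1 h hc)

theorem sort_insert_last {n : ℕ} {S : Finset ℕ} (h : S ∈ (Finset.range n).powerset) :
    (insert n S).sort (· ≤ ·) = S.sort (· ≤ ·) ++ [n] := by
  have hv := Vd_sort h
  have hp : (S.sort (· ≤ ·) ++ [n]).Pairwise (· < ·) := by
    rw [List.pairwise_append]
    refine ⟨hv.1, by simp, ?_⟩
    intro a ha b hb
    rw [List.mem_singleton] at hb
    exact hb ▸ hv.2 a ha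
  have hs : insert n S = (S.sort (· ≤ ·) ++ [n]).toFinset := by
    ext; simp [or_comm]
  rw [hs, List.toFinset_sort]
  · exact hp.imp le_of_lt
  · exact hp.imp ne_of_lt

theorem Qf_snoc (f : List Bool → AB R) (l : List Bool) (x : Bool) :
    Qf R f (l ++ [x]) = Qf R (fun s => f (s ++ [x])) l + Qf R (nw R) l * (bv R * f []) := by
  rw [Qf, List.length_append, List.length_singleton, Finset.range_add_one,
    Finset.sum_powerset_insert (by simp), Qf, Qf, Finset.sum_mul]
  congr 1
  · exact Finset.sum_congr rfl fun S hS => Pf_snoc R f x l _ (Vd_sort hS)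
  · refine Finset.sum_congr rfl fun S hS => ?_
    rw [sort_insert_last hS, Pf_snoc' R f x l _ (Vd_sort hS)]

theorem Qf_add (f g : List Bool → AB R) (l : List Bool) :
    Qf R (fun s => f s + g s) l = Qf R f l + Qf R g l := by
  simp [Qf, Pf_add, Finset.sum_add_distrib]

theorem Qf_mul (f : List Bool → AB R) (e : AB R) (l : List Bool) :
    Qf R (fun s => f s * e) l = Qf R f l * e := by
  simp [Qf, Pf_mul, Finset.sum_mul]

theorem Qf_zero (l : List Bool) : Qf R (fun _ => 0) l = 0 := by
  simp [Qf, Pf_zero]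

theorem sort_map_val {n : ℕ} (S : Finset (Fin n)) :
    (S.sort (· ≤ ·)).map Fin.val = (S.map Fin.valEmbedding).sort (· ≤ ·) := by
  have hp : ((S.sort (· ≤ ·)).map Fin.val).Pairwise (· < ·) := by
    rw [List.pairwise_map]
    exact (Finset.sortedLT_sort S).pairwise
  have hs : S.map Fin.valEmbedding = ((S.sort (· ≤ ·)).map Fin.val).toFinset := by
    ext; simp
  rw [hs, eq_comm, List.toFinset_sort]
  · exact hp.imp le_of_lt
  · exact hp.imp ne_of_lt

theorem Tmap_word (l : List Bool) : Tmap R (word R l) = Qf R (kw R) l := by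
  rw [Tmap, onBasis_word, Qf]
  refine Finset.sum_bij (fun S _ => S.map Fin.valEmbedding) ?_ ?_ ?_ ?_
  · intro S _
    rw [Finset.mem_powerset]
    intro c hc
    simp only [Finset.mem_map, Fin.valEmbedding_apply] at hc
    obtain ⟨a, _, rfl⟩ := hc
    simp
  · intro S _ S' _ h
    exact Finset.map_injective _ h
  · intro S hS
    rw [Finset.mem_powerset] at hS
    refine ⟨Finset.univ.filter (fun i : Fin l.length => (i : ℕ) ∈ S), Finset.mem_univ _, ?_⟩
    ext c
    simp only [Finset.mem_map, Finset.mem_filter, Finset.mem_univ, true_and,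
      Fin.valEmbedding_apply]
    constructor
    · rintro ⟨a, ha, rfl⟩
      exact ha
    · intro hc
      exact ⟨⟨c, Finset.mem_range.1 (hS hc)⟩, hc, rfl⟩
  · intro S _
    rw [chainProd_segments, sort_map_val]

/-- The companion transform with `ν` in the last place. -/
def Nm : AB R →ₗ[R] AB R := onBasis R (Qf R (nw R))

theorem Nm_word (l : List Bool) : Nm R (word R l) = Qf R (nw R) l := onBasis_word R _ _

theorem T_one : Tmap R 1 = 1 := by
  rw [← word_nil, Tmap_word]; simp [Qf, Pf, kw_nil, word_nil]
theorem N_one : Nm R 1 = 2 := by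
  rw [← word_nil, Nm_word]; simp [Qf, Pf, nw_nil]

theorem T_a (u : AB R) : Tmap R (u * av R) = Tmap R u * ev R + Nm R u * bv R := by
  have : Tmap R ∘ₗ LinearMap.mulRight R (av R) =
      LinearMap.mulRight R (ev R) ∘ₗ Tmap R + LinearMap.mulRight R (bv R) ∘ₗ Nm R := by
    apply ext_word
    intro l
    simp [av, word_mul, Tmap_word, Nm_word, Qf_snoc, kw_a, kw_nil, Qf_mul]
  exact LinearMap.congr_fun this u

theorem T_b (u : AB R) : Tmap R (u * bv R) = Nm R u * bv R := by
  have : Tmap R ∘ₗ LinearMap.mulRight R (bv R) = LinearMap.mulRight R (bv R) ∘ₗ Nm R := by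
    apply ext_word
    intro l
    simp [bv, word_mul, Tmap_word, Nm_word, Qf_snoc, kw_b, kw_nil, Qf_zero]
  exact LinearMap.congr_fun this u

theorem N_a (u : AB R) :
    Nm R (u * av R) = Nm R u * ev R + Tmap R u * ev R + Nm R u * (bv R * 2) := by
  have : Nm R ∘ₗ LinearMap.mulRight R (av R) =
      LinearMap.mulRight R (ev R) ∘ₗ Nm R + LinearMap.mulRight R (ev R) ∘ₗ Tmap R
        + LinearMap.mulRight R (bv R * 2) ∘ₗ Nm R := by
    apply ext_word
    intro l
    simp [av, word_mul, Tmap_word, Nm_word, Qf_snoc, nw_a, nw_nil, Qf_add, Qf_mul, mul_assoc]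
  exact LinearMap.congr_fun this u

theorem N_b (u : AB R) :
    Nm R (u * bv R) = Tmap R u * ev R + Nm R u * (bv R * 2) := by
  have : Nm R ∘ₗ LinearMap.mulRight R (bv R) =
      LinearMap.mulRight R (ev R) ∘ₗ Tmap R + LinearMap.mulRight R (bv R * 2) ∘ₗ Nm R := by
    apply ext_word
    intro l
    simp only [bv, LinearMap.comp_apply, LinearMap.mulRight_apply, LinearMap.add_apply,
      word_mul, Tmap_word, Nm_word, Qf_snoc, nw_b, nw_nil, Qf_mul]
  exact LinearMap.congr_fun this u

/-- The invariant carried through the induction. -/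
def Inv (v : AB R) : Prop := Tmap R (v * av R) = Gm R v ∧ Nm R v = 2 * Hm R v

theorem Inv_one : Inv R 1 := by
  constructor
  · rw [T_a, T_one, N_one, Gm]
    have h1 : revMap R 1 = 1 := by rw [← word_nil, revMap_word]; rfl
    have : omegaMap R (av R) = cv R := by
      rw [omegaMap, av, onBasis_word]; simp [omegaWord]
    simp only [LinearMap.comp_apply, h1, LinearMap.mulLeft_apply, mul_one, this, revMap_c]
    simp only [ev, cv]; noncomm_ring
  · have h1 : revMap R 1 = 1 := by rw [← word_nil, revMap_word]; rfl
    have : omegaMap R 1 = 1 := by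
      rw [omegaMap, ← word_nil, onBasis_word]; simp [omegaWord, word_nil]
    simp only [N_one, Hm, LinearMap.comp_apply, h1, this, mul_one]

theorem Inv_c (v : AB R) (h : Inv R v) : Inv R (v * cv R) := by
  obtain ⟨h1, h2⟩ := h
  rw [T_a] at h1
  constructor
  · rw [Gm_c, ← mul_assoc 2, ← h2, ← h1]
    simp only [cv, dv, mul_add, map_add, add_mul, T_a, T_b, N_a, N_b, ev]
    noncomm_ring
  · rw [Hm_c, mul_add, ← mul_assoc 2, ← h2, ← h1]
    simp only [cv, dv, mul_add, map_add, add_mul, T_a, T_b, N_a, N_b, ev]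
    noncomm_ring

theorem Inv_d (v : AB R) (h : Inv R v) : Inv R (v * dv R) := by
  obtain ⟨h1, h2⟩ := h
  rw [T_a] at h1
  constructor
  · rw [Gm_d, ← mul_assoc 2, ← mul_assoc 2 (Hm R v), ← h2, ← h1]
    simp only [cv, dv, mul_add, map_add, add_mul, ← mul_assoc v, T_a, T_b, N_a, N_b, ev]
    noncomm_ring
  · rw [Hm_d, mul_add, ← mul_assoc 2 (Hm R v), ← h2, ← h1]
    simp only [cv, dv, mul_add, map_add, add_mul, ← mul_assoc v, T_a, T_b, N_a, N_b, ev]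
    noncomm_ring

theorem Inv_mul (x : AB R) (hx : x ∈ Algebra.adjoin R ({cv R, dv R} : Set (AB R))) :
    ∀ v, Inv R v → Inv R (v * x) := by
  induction hx using Algebra.adjoin_induction with
  | mem x hx =>
    rcases hx with rfl | rfl
    · exact Inv_c R
    · exact Inv_d R
  | algebraMap r =>
    rintro v ⟨h1, h2⟩
    have : v * algebraMap R (AB R) r = r • v := by
      rw [← Algebra.commutes, Algebra.smul_def]
    rw [this]
    exact ⟨by rw [smul_mul_assoc, map_smul, map_smul, h1],
      by rw [map_smul, map_smul, h2, mul_smul_comm]⟩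
  | add x y _ _ hx hy =>
    intro v hv
    obtain ⟨h1, h2⟩ := hx v hv
    obtain ⟨h3, h4⟩ := hy v hv
    exact ⟨by rw [mul_add, add_mul, map_add, map_add, h1, h3],
      by rw [mul_add, map_add, map_add, h2, h4, mul_add]⟩
  | mul x y _ _ hx hy =>
    intro v hv
    rw [← mul_assoc]
    exact hy _ (hx _ hv)

end Helpers

theorem tchebyshev_eq_omega (v : AB ℤ)
    (hv : v ∈ Algebra.adjoin ℤ ({cv ℤ, dv ℤ} : Set (AB ℤ))) :
    Tmap ℤ (v * av ℤ) = revMap ℤ (omegaMap ℤ (av ℤ * revMap ℤ v)) := by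
  have h := (Inv_mul ℤ v hv 1 (Inv_one ℤ)).1
  rw [one_mul] at h
  exact h

end Tcheb
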